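/- arXiv:2504.00807 — 3 statements merged into one kernel-verified Lean document; each statement's English description precedes it below -/
import Mathlib

section
/- Let T = (V, root, par) be a leafless, locally finite rooted directed tree of finite branching index. Then the bounded Cesàro operator C_T on ℓ²(V) is essentially normal: the self-commutator C_T* C_T − C_T C_T* is a compact operator on ℓ²(V). -/
noncomputable section

open scoped ENNReal

/-- A rooted directed tree encoded by a vertex set `V`, a root, and a parent map. -/
structure TreeData (V : Type) where
  root : V
  par : V → V
  par_root : par root = root
  hroot : ∀ v : V, ∃ n : ℕ, par^[n] v = root

namespace TreeData

variable {V : Type}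

open scoped Classical in
/-- The depth of a vertex: the least `n` with `par^[n] v = root`. -/
def dep (T : TreeData V) (v : V) : ℕ := Nat.find (T.hroot v)

/-- The Cesàro map `Λ_T`. -/
def cesaro (T : TreeData V) (f : V → ℂ) : V → ℂ := fun v =>
  ((T.dep v : ℂ) + 1)⁻¹ * ∑ j ∈ Finset.range (T.dep v + 1), f (T.par^[j] v)

/-- The `n`-th level `Chi^⟨n⟩(root)`: vertices of depth `n`. -/
def level (T : TreeData V) (n : ℕ) : Set V := {v : V | T.dep v = n}

/-- The set of children of a vertex. -/
def chi (T : TreeData V) (u : V) : Set V := {v : V | v ≠ T.root ∧ T.par v = u}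

end TreeData

/-- The Hilbert space `ℓ²(V)` of square-summable complex functions on `V`. -/
abbrev L2 (V : Type) : Type := lp (fun _ : V => ℂ) 2

/-- A branching vertex: a vertex with at least two children. -/
def TreeData.branching {V : Type} (T : TreeData V) (v : V) : Prop := 2 ≤ (T.chi v).encard

/-!
Write `w v = 1 / (dep v + 1)`. The entry of `C* C - C C*` at two vertices `u`, `v` is the sum of
`w²` over their common descendants minus `w u * w v` times the number of their common ancestors.
Every such entry is `O(w u * w v)`. If `u` and `v` are incomparable, they have no common
descendants, and at most `B + 1` common ancestors, because subtrees rooted below the last branching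
depth `B` are chains. If `v` is an ancestor of `u`, the entry is `∑ w² - w u` over the subtree of
`u`, which for all but finitely many `u` is an infinite ray; then `∑_{n ≥ d} 1 / (n + 1)²` differs
from `1 / (d + 1)` by at most `1 / (d + 1)²`. Now `w` is the image under `C` of the indicator of
the root, hence lies in `ℓ²(V)`. Thus every level is finite, which bounds the number of exceptional
`u`, and the self-commutator is Hilbert–Schmidt, hence compact.
-/

open Filter Topology Asymptotics InnerProductSpace ContinuousLinearMap

section HilbertSchmidt

variable {ι κ 𝕜 E F : Type*} [RCLike 𝕜] [NormedAddCommGroup E] [InnerProductSpace 𝕜 E]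
  [NormedAddCommGroup F]

theorem isCompactOperator_rankOne [NormedSpace 𝕜 F] (y : F) (x : E) :
    IsCompactOperator (rankOne 𝕜 y x) :=
  (isCompactOperator_of_locallyCompactSpace_rng (toSpanSingleton 𝕜 y)).comp_clm (innerSL 𝕜 x)

theorem norm_sum_rankOne_orthonormal_le [NormedSpace 𝕜 F] {v : ι → E}
    (hv : Orthonormal 𝕜 v) (y : ι → F) (s : Finset ι) :
    ‖∑ i ∈ s, rankOne 𝕜 (y i) (v i)‖ ≤ √(∑ i ∈ s, ‖y i‖ ^ 2) := by
  refine opNorm_le_bound _ (Real.sqrt_nonneg _) fun x ↦ ?_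
  calc ‖(∑ i ∈ s, rankOne 𝕜 (y i) (v i)) x‖
      ≤ ∑ i ∈ s, ‖y i‖ * ‖⟪v i, x⟫_𝕜‖ := by
        simpa [sum_apply, norm_smul, mul_comm] using
          norm_sum_le s fun i ↦ rankOne 𝕜 (y i) (v i) x
    _ ≤ √(∑ i ∈ s, ‖y i‖ ^ 2) * √(∑ i ∈ s, ‖⟪v i, x⟫_𝕜‖ ^ 2) :=
        Real.sum_mul_le_sqrt_mul_sqrt _ _ _
    _ ≤ √(∑ i ∈ s, ‖y i‖ ^ 2) * ‖x‖ := by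
        gcongr
        exact Real.sqrt_le_iff.2 ⟨norm_nonneg x, hv.sum_inner_products_le x⟩

theorem summable_rankOne [NormedSpace 𝕜 F] [CompleteSpace F] {v : ι → E} (hv : Orthonormal 𝕜 v)
    {y : ι → F} (hy : Summable fun i ↦ ‖y i‖ ^ 2) :
    Summable fun i ↦ rankOne 𝕜 (y i) (v i) := by
  refine summable_iff_vanishing_norm.2 fun ε hε ↦ ?_
  obtain ⟨s, hs⟩ := summable_iff_vanishing_norm.1 hy (ε ^ 2) (by positivity)
  refine ⟨s, fun t ht ↦ (norm_sum_rankOne_orthonormal_le hv y t).trans_lt ?_⟩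
  exact (Real.sqrt_lt' hε).2 ((le_abs_self _).trans_lt (hs t ht))

theorem hasSum_rankOne [NormedSpace 𝕜 F] [CompleteSpace F] (b : HilbertBasis ι 𝕜 E)
    (D : E →L[𝕜] F) (hD : Summable fun i ↦ ‖D (b i)‖ ^ 2) :
    HasSum (fun i ↦ rankOne 𝕜 (D (b i)) (b i)) D := by
  have hsum := (summable_rankOne b.orthonormal hD).hasSum
  convert hsum
  ext x
  have hx : HasSum (fun i ↦ ⟪b i, x⟫_𝕜 • D (b i)) (D x) := by
    simpa [b.repr_apply_apply] using (b.hasSum_repr x).mapL D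
  exact hx.unique (hsum.mapL (apply 𝕜 F x))

theorem isCompactOperator_of_summable_sq_norm [NormedSpace 𝕜 F] [CompleteSpace F]
    (b : HilbertBasis ι 𝕜 E) (D : E →L[𝕜] F) (hD : Summable fun i ↦ ‖D (b i)‖ ^ 2) :
    IsCompactOperator D :=
  isCompactOperator_of_tendsto (hasSum_rankOne b D hD) <| .of_forall fun s ↦
    (compactOperator (RingHom.id 𝕜) E F).sum_mem (t := s) fun i _ ↦
      isCompactOperator_rankOne (D (b i)) (b i)

theorem hasSum_sq_norm_inner (b : HilbertBasis ι 𝕜 E) (x : E) :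
    HasSum (fun i ↦ ‖⟪b i, x⟫_𝕜‖ ^ 2) (‖x‖ ^ 2) := by
  simpa [b.repr_apply_apply] using lp.hasSum_norm (p := 2) (by norm_num) (b.repr x)

theorem isCompactOperator_of_summable_sq_norm_inner [InnerProductSpace 𝕜 F] [CompleteSpace F]
    (b : HilbertBasis ι 𝕜 E) (c : HilbertBasis κ 𝕜 F) (D : E →L[𝕜] F)
    (hD : Summable fun p : ι × κ ↦ ‖⟪c p.2, D (b p.1)⟫_𝕜‖ ^ 2) :
    IsCompactOperator D :=
  isCompactOperator_of_summable_sq_norm b D <| hD.prod.congr fun i ↦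
    (hasSum_sq_norm_inner c (D (b i))).tsum_eq

end HilbertSchmidt

section InverseSquares

theorem hasSum_sub_succ {f : ℕ → ℝ} (hf : Antitone f) (h0 : Tendsto f atTop (𝓝 0)) :
    HasSum (fun n ↦ f n - f (n + 1)) (f 0) := by
  refine (hasSum_iff_tendsto_nat_of_nonneg (fun n ↦ sub_nonneg.2 (hf n.le_succ)) _).2 ?_
  simpa only [Finset.sum_range_sub', sub_zero] using h0.const_sub (f 0)

theorem abs_tsum_inv_sq_sub_inv_le {x : ℝ} (hx : 0 < x) :
    |∑' n : ℕ, ((x + n)⁻¹) ^ 2 - x⁻¹| ≤ (x⁻¹) ^ 2 := by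
  set f : ℕ → ℝ := fun n ↦ (x + n)⁻¹ with hf
  have hx_add (n : ℕ) : 0 < x + n := by positivity
  have hpos (n : ℕ) : 0 < f n := inv_pos.2 (hx_add n)
  have hanti : Antitone f := fun m n hmn ↦ by
    have := hx_add m
    simp only [hf]
    gcongr
  have hlim : Tendsto f atTop (𝓝 0) :=
    (tendsto_atTop_add_const_left _ x tendsto_natCast_atTop_atTop).inv_tendsto_atTop
  have htel := hasSum_sub_succ hanti hlim
  have htel_sq : HasSum (fun n ↦ f n ^ 2 - f (n + 1) ^ 2) (f 0 ^ 2) :=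
    hasSum_sub_succ (fun m n hmn ↦ pow_le_pow_left₀ (hpos n).le (hanti hmn) 2)
      (by simpa using hlim.pow 2)
  have hmul (n : ℕ) : f n - f (n + 1) = f n * f (n + 1) := by
    have := hx_add n
    simp only [hf]
    push_cast
    field_simp
    ring
  -- Since `a - b = a * b` for consecutive terms `a ≥ b`, we get
  -- `a² - (a - b) = a * (a - b) ≤ a² - b²`, and both `a - b` and `a² - b²` telescope.
  have hdiff_nonneg (n : ℕ) : 0 ≤ f n ^ 2 - (f n - f (n + 1)) := by
    nlinarith [hmul n, hpos n, hanti n.le_succ]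
  have hdiff_le (n : ℕ) : f n ^ 2 - (f n - f (n + 1)) ≤ f n ^ 2 - f (n + 1) ^ 2 := by
    nlinarith [hmul n, hpos (n + 1), hanti n.le_succ]
  have hdiff := Summable.of_nonneg_of_le hdiff_nonneg hdiff_le htel_sq.summable
  have hsum : ∑' n, f n ^ 2 - f 0 = ∑' n, (f n ^ 2 - (f n - f (n + 1))) := by
    rw [sub_eq_iff_eq_add, ← (hdiff.hasSum.add htel).tsum_eq]
    simp only [sub_add_cancel]
  have hbound : |∑' n, f n ^ 2 - f 0| ≤ f 0 ^ 2 := by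
    rw [hsum, abs_of_nonneg (tsum_nonneg hdiff_nonneg), ← htel_sq.tsum_eq]
    exact hdiff.tsum_le_tsum hdiff_le htel_sq.summable
  simpa [hf] using hbound

end InverseSquares

namespace TreeData

variable {V : Type} (T : TreeData V)

/-- The ancestors of `v`, including `v` itself. -/
def ancestors (v : V) : Set V := Set.range fun n ↦ T.par^[n] v

/-- The vertices of the subtree rooted at `v`, including `v` itself. -/
def descendants (v : V) : Set V := {w | v ∈ T.ancestors w}

/-- The factor `1 / (dep v + 1)` in the Cesàro mean at `v`, as a real number. -/
def weight (v : V) : ℝ := ((T.dep v : ℝ) + 1)⁻¹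

theorem weight_pos (v : V) : 0 < T.weight v := by
  unfold weight
  positivity

section Depth

theorem iterate_par_dep (v : V) : T.par^[T.dep v] v = T.root := by
  classical exact Nat.find_spec (T.hroot v)

theorem dep_eq_zero {v : V} : T.dep v = 0 ↔ v = T.root := by
  simp [dep]

theorem dep_par (v : V) : T.dep (T.par v) = T.dep v - 1 := by
  classical
  by_cases hv : v = T.root
  · rw [hv, T.par_root, T.dep_eq_zero.2 rfl]
  · have h : T.dep v = T.dep (T.par v) + 1 :=
      Nat.find_comp_succ (T.hroot v) (T.hroot (T.par v)) hv
    rw [h, Nat.add_sub_cancel]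

theorem dep_iterate_par (n : ℕ) (v : V) : T.dep (T.par^[n] v) = T.dep v - n := by
  induction n with
  | zero => rfl
  | succ n ih => rw [Function.iterate_succ_apply', dep_par, ih, Nat.sub_sub]

theorem dep_of_mem_chi {v w : V} (hw : w ∈ T.chi v) : T.dep w = T.dep v + 1 := by
  have hpos : T.dep w ≠ 0 := mt T.dep_eq_zero.1 hw.1
  have hpar := T.dep_par w
  rw [hw.2] at hpar
  omega

end Depth

section Ancestors

variable {T}

theorem mem_ancestors_self (v : V) : v ∈ T.ancestors v := ⟨0, rfl⟩

theorem root_mem_ancestors (v : V) : T.root ∈ T.ancestors v := ⟨_, T.iterate_par_dep v⟩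

theorem par_mem_ancestors (v : V) : T.par v ∈ T.ancestors v := ⟨1, rfl⟩

theorem ancestors_subset {a v : V} (ha : a ∈ T.ancestors v) : T.ancestors a ⊆ T.ancestors v := by
  obtain ⟨n, rfl⟩ := ha
  rintro _ ⟨m, rfl⟩
  exact ⟨m + n, Function.iterate_add_apply _ m n v⟩

theorem descendants_subset {a v : V} (ha : a ∈ T.ancestors v) :
    T.descendants v ⊆ T.descendants a :=
  fun _ hw ↦ ancestors_subset hw ha

theorem dep_le_of_mem_ancestors {a v : V} (ha : a ∈ T.ancestors v) : T.dep a ≤ T.dep v := by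
  obtain ⟨n, rfl⟩ := ha
  simp [dep_iterate_par]

theorem weight_le_of_mem_ancestors {a v : V} (ha : a ∈ T.ancestors v) :
    T.weight v ≤ T.weight a := by
  have := dep_le_of_mem_ancestors ha
  unfold weight
  gcongr

theorem iterate_par_of_mem_ancestors {a v : V} (ha : a ∈ T.ancestors v) :
    T.par^[T.dep v - T.dep a] v = a := by
  obtain ⟨n, rfl⟩ : ∃ n, T.par^[n] v = a := ha
  rw [dep_iterate_par]
  rcases le_total n (T.dep v) with hn | hn
  · rw [Nat.sub_sub_self hn]
  · rw [Nat.sub_eq_zero_of_le hn, Nat.sub_zero, iterate_par_dep,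
      T.dep_eq_zero.1 ((T.dep_iterate_par n v).trans (Nat.sub_eq_zero_of_le hn))]

theorem bijOn_dep_ancestors (v : V) : Set.BijOn T.dep (T.ancestors v) (Set.Iic (T.dep v)) := by
  refine ⟨fun a ↦ dep_le_of_mem_ancestors, fun a ha b hb hab ↦ ?_, fun n hn ↦ ?_⟩
  · rw [← iterate_par_of_mem_ancestors ha, ← iterate_par_of_mem_ancestors hb, hab]
  · exact ⟨_, ⟨T.dep v - n, rfl⟩, by rw [dep_iterate_par, Nat.sub_sub_self hn]⟩

theorem ncard_ancestors (v : V) : (T.ancestors v).ncard = T.dep v + 1 := by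
  rw [← (bijOn_dep_ancestors v).injOn.ncard_image, (bijOn_dep_ancestors v).image_eq]
  simp [Set.ncard_eq_toFinset_card']

theorem nonempty_chi_of_mem_ancestors {a v : V} (ha : a ∈ T.ancestors v) (hne : a ≠ v) :
    (T.chi a).Nonempty := by
  have hiter := iterate_par_of_mem_ancestors ha
  obtain ⟨n, hn⟩ : ∃ n, T.dep v - T.dep a = n + 1 :=
    Nat.exists_eq_succ_of_ne_zero fun h ↦ hne (by rw [← hiter, h, Function.iterate_zero_apply])
  rw [hn, Function.iterate_succ_apply'] at hiter
  refine ⟨T.par^[n] v, fun hroot ↦ ?_, hiter⟩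
  have := T.dep_iterate_par n v
  rw [T.dep_eq_zero.2 hroot] at this
  omega

theorem comparable_of_common_descendant {u v w : V} (hu : u ∈ T.ancestors w)
    (hv : v ∈ T.ancestors w) : u ∈ T.ancestors v ∨ v ∈ T.ancestors u := by
  obtain ⟨i, rfl⟩ := hu
  obtain ⟨j, rfl⟩ := hv
  rcases le_total i j with hij | hji
  · exact .inr ⟨j - i, by simp only [← Function.iterate_add_apply, Nat.sub_add_cancel hij]⟩
  · exact .inl ⟨i - j, by simp only [← Function.iterate_add_apply, Nat.sub_add_cancel hji]⟩

theorem exists_mem_descendants_dep_eq {v : V} (hv : ∀ w ∈ T.descendants v, (T.chi w).Nonempty)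
    {n : ℕ} (hn : T.dep v ≤ n) : ∃ w ∈ T.descendants v, T.dep w = n := by
  induction n, hn using Nat.le_induction with
  | base => exact ⟨v, mem_ancestors_self v, rfl⟩
  | succ n _ ih =>
    obtain ⟨w, hw, rfl⟩ := ih
    obtain ⟨u, hu⟩ := hv w hw
    have hwu : w ∈ T.ancestors u := hu.2 ▸ par_mem_ancestors u
    exact ⟨u, ancestors_subset hwu hw, T.dep_of_mem_chi hu⟩

end Ancestors

section FiniteBranchingIndex

variable {T} {B : ℕ} (hB : ∀ v, T.branching v → T.dep v ≤ B)

include hB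

theorem subsingleton_chi {v : V} (hv : B < T.dep v) : (T.chi v).Subsingleton := by
  have hlt : (T.chi v).encard < 1 + 1 := not_le.1 fun h ↦ hv.not_ge (hB v h)
  exact Set.encard_le_one_iff_subsingleton.1 (ENat.lt_add_one_iff (by simp) |>.1 hlt)

theorem eq_of_iterate_par_eq {n : ℕ} {v w : V} (hv : B < T.dep (T.par^[n] v))
    (h : T.par^[n] v = T.par^[n] w) : v = w := by
  induction n generalizing v w with
  | zero => exact h
  | succ n ih =>
    have hw : B < T.dep (T.par^[n + 1] w) := h ▸ hv
    have hpar : T.par v = T.par w := ih hv h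
    rw [dep_iterate_par] at hv hw
    have hne {u : V} (hu : B < T.dep u - (n + 1)) : u ≠ T.root :=
      fun h ↦ by rw [T.dep_eq_zero.2 h] at hu; omega
    refine subsingleton_chi hB ?_ ⟨hne hv, rfl⟩ ⟨hne hw, hpar.symm⟩
    rw [dep_par]
    omega

theorem comparable_of_deep_common_ancestor {a v w : V} (ha : B < T.dep a) (hv : a ∈ T.ancestors v)
    (hw : a ∈ T.ancestors w) : v ∈ T.ancestors w ∨ w ∈ T.ancestors v := by
  obtain ⟨i, hi⟩ : ∃ i, T.par^[i] v = a := hv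
  obtain ⟨j, hj⟩ : ∃ j, T.par^[j] w = a := hw
  wlog hij : i ≤ j generalizing v w i j
  · exact (this j hj i hi (le_of_not_ge hij)).symm
  refine .inl ⟨j - i, (eq_of_iterate_par_eq hB (n := i) (hi ▸ ha) ?_).symm⟩
  rw [← Function.iterate_add_apply, Nat.add_sub_cancel' hij, hi, hj]

theorem injOn_dep_descendants {v : V} (hv : B < T.dep v) :
    Set.InjOn T.dep (T.descendants v) := by
  intro w hw w' hw' heq
  have hiter := iterate_par_of_mem_ancestors hw
  refine eq_of_iterate_par_eq hB (by rwa [hiter]) (hiter.trans ?_)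
  rw [heq, iterate_par_of_mem_ancestors hw']

theorem finite_deep_leaves (hdep : Tendsto T.dep cofinite atTop) :
    {v | B < T.dep v ∧ T.chi v = ∅}.Finite := by
  have hlevel : (T.level (B + 1)).Finite :=
    (eventually_cofinite.1 (hdep.eventually_gt_atTop (B + 1))).subset fun v hv ↦
      not_lt.2 (le_of_eq hv)
  have hdeep {v : V} (hv : B < T.dep v) : T.dep (T.par^[T.dep v - (B + 1)] v) = B + 1 := by
    rw [dep_iterate_par]
    omega
  -- A leaf deeper than `B` is determined by its ancestor of depth `B + 1`.
  refine .of_injOn (f := fun v ↦ T.par^[T.dep v - (B + 1)] v) (fun v hv ↦ hdeep hv.1) ?_ hlevel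
  intro v hv w hw hvw
  have heq {x y : V} (hx : T.chi x = ∅) (hxy : x ∈ T.ancestors y) : x = y :=
    by_contra fun hne ↦ (nonempty_chi_of_mem_ancestors hxy hne).ne_empty hx
  rcases comparable_of_deep_common_ancestor hB ((hdeep hv.1).symm ▸ B.lt_succ_self)
    ⟨_, rfl⟩ ⟨_, hvw.symm⟩ with h | h
  · exact heq hv.2 h
  · exact (heq hw.2 h).symm

theorem eventually_bijOn_dep_descendants (hdep : Tendsto T.dep cofinite atTop) :
    ∀ᶠ v in cofinite, Set.BijOn T.dep (T.descendants v) (Set.Ici (T.dep v)) := by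
  obtain ⟨N, hN⟩ := ((finite_deep_leaves hB hdep).image T.dep).bddAbove
  filter_upwards [hdep.eventually_gt_atTop (max B N)] with v hv
  have hchi : ∀ w ∈ T.descendants v, (T.chi w).Nonempty := fun w hw ↦ by
    have hw' := hv.trans_le (dep_le_of_mem_ancestors hw)
    rw [Set.nonempty_iff_ne_empty]
    intro hempty
    have := hN ⟨w, ⟨(le_max_left B N).trans_lt hw', hempty⟩, rfl⟩
    exact ((le_max_right B N).trans_lt hw').not_ge this
  exact ⟨fun w ↦ dep_le_of_mem_ancestors,
    injOn_dep_descendants hB ((le_max_left B N).trans_lt hv),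
    fun n hn ↦ exists_mem_descendants_dep_eq hchi hn⟩

end FiniteBranchingIndex

theorem tendsto_dep_cofinite (hw : Summable fun v ↦ T.weight v ^ 2) :
    Tendsto T.dep cofinite atTop := by
  have hsqrt : Tendsto T.weight cofinite (𝓝 0) := by
    simpa [Real.sqrt_sq (T.weight_pos _).le] using hw.tendsto_cofinite_zero.sqrt
  have hzero : Tendsto T.weight cofinite (𝓝[>] 0) :=
    tendsto_nhdsWithin_iff.2 ⟨hsqrt, .of_forall T.weight_pos⟩
  have hinv : Tendsto (fun v ↦ (T.dep v : ℝ) + 1) cofinite atTop := by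
    simpa [weight, Function.comp_def] using tendsto_inv_nhdsGT_zero.comp hzero
  exact tendsto_natCast_atTop_iff.1 <| by
    simpa using tendsto_atTop_add_const_right _ (-1 : ℝ) hinv

section CommutatorKernel

/-- The matrix of the self-commutator `C_T* C_T - C_T C_T*` in the standard basis of `ℓ²(V)`: the
sum over common descendants is the entry of `C_T* C_T`, and the count of common ancestors comes
from the entry of `C_T C_T*`. -/
def commutatorKernel (u v : V) : ℝ :=
  ∑' w : ↥(T.descendants u ∩ T.descendants v), T.weight w ^ 2 -
    T.weight u * T.weight v * (T.ancestors u ∩ T.ancestors v).ncard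

variable {T}

theorem commutatorKernel_comm (u v : V) : T.commutatorKernel u v = T.commutatorKernel v u := by
  rw [commutatorKernel, commutatorKernel, Set.inter_comm, Set.inter_comm (T.ancestors u),
    mul_comm (T.weight u)]

theorem commutatorKernel_of_mem_ancestors {u v : V} (h : v ∈ T.ancestors u) :
    T.commutatorKernel u v = ∑' w : T.descendants u, T.weight w ^ 2 - T.weight u := by
  have hdep : (T.dep v : ℝ) + 1 ≠ 0 := by positivity
  rw [commutatorKernel, Set.inter_eq_left.2 (descendants_subset h),
    Set.inter_eq_right.2 (ancestors_subset h), ncard_ancestors, mul_assoc]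
  simp only [weight, Nat.cast_add, Nat.cast_one, inv_mul_cancel₀ hdep, mul_one]

theorem tsum_weight_sq_descendants {v : V}
    (hv : Set.BijOn T.dep (T.descendants v) (Set.Ici (T.dep v))) :
    ∑' w : T.descendants v, T.weight w ^ 2 = ∑' n : ℕ, ((T.dep v + 1 + n : ℝ)⁻¹) ^ 2 := by
  have hIci : T.dep '' T.descendants v = Set.range fun n ↦ T.dep v + n := by
    rw [hv.image_eq]
    ext n
    simp [le_iff_exists_add, eq_comm]
  calc ∑' w : T.descendants v, T.weight w ^ 2
      = ∑' n : T.dep '' T.descendants v, (((n : ℕ) + 1 : ℝ)⁻¹) ^ 2 :=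
        (tsum_image (fun n : ℕ ↦ ((n + 1 : ℝ)⁻¹) ^ 2) hv.injOn).symm
    _ = ∑' n : ℕ, ((T.dep v + 1 + n : ℝ)⁻¹) ^ 2 := by
        rw [hIci, tsum_range (fun n : ℕ ↦ ((n + 1 : ℝ)⁻¹) ^ 2) (add_right_injective _)]
        simp only [Nat.cast_add, add_right_comm]

theorem abs_commutatorKernel_self_le {v : V}
    (hv : Set.BijOn T.dep (T.descendants v) (Set.Ici (T.dep v))) :
    |T.commutatorKernel v v| ≤ T.weight v ^ 2 := by
  rw [commutatorKernel_of_mem_ancestors (mem_ancestors_self v), tsum_weight_sq_descendants hv]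
  exact abs_tsum_inv_sq_sub_inv_le (by positivity)

variable {B : ℕ} (hB : ∀ v, T.branching v → T.dep v ≤ B)

include hB

theorem exists_abs_commutatorKernel_self_le (hdep : Tendsto T.dep cofinite atTop) :
    ∃ M, ∀ v, |T.commutatorKernel v v| ≤ M * T.weight v ^ 2 := by
  have hO : (fun v ↦ T.commutatorKernel v v) =O[cofinite] fun v ↦ T.weight v ^ 2 :=
    .of_norm_eventuallyLE <|
      (eventually_bijOn_dep_descendants hB hdep).mono fun v ↦ abs_commutatorKernel_self_le
  simpa using (isBigO_cofinite_iff fun v hv ↦ absurd hv (pow_pos (T.weight_pos v) 2).ne').1 hO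

theorem ncard_ancestors_inter_le {u v : V} (huv : u ∉ T.ancestors v) (hvu : v ∉ T.ancestors u) :
    (T.ancestors u ∩ T.ancestors v).ncard ≤ B + 1 := by
  have hmaps : ∀ a ∈ T.ancestors u ∩ T.ancestors v, T.dep a ∈ Set.Iic B := fun a ha ↦
    not_lt.1 fun hlt ↦ (comparable_of_deep_common_ancestor hB hlt ha.1 ha.2).elim huv hvu
  calc (T.ancestors u ∩ T.ancestors v).ncard
      ≤ (Set.Iic B).ncard :=
        Set.ncard_le_ncard_of_injOn T.dep hmaps
          ((bijOn_dep_ancestors u).injOn.mono Set.inter_subset_left)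
    _ = B + 1 := by simp [Set.ncard_eq_toFinset_card']

theorem abs_commutatorKernel_le_of_notMem_ancestors {u v : V} (huv : u ∉ T.ancestors v)
    (hvu : v ∉ T.ancestors u) :
    |T.commutatorKernel u v| ≤ (B + 1) * (T.weight u * T.weight v) := by
  have hdisj : T.descendants u ∩ T.descendants v = ∅ :=
    Set.eq_empty_of_forall_notMem fun w hw ↦
      (comparable_of_common_descendant hw.1 hw.2).elim huv hvu
  have hcard : ((T.ancestors u ∩ T.ancestors v).ncard : ℝ) ≤ B + 1 := by
    exact_mod_cast ncard_ancestors_inter_le hB huv hvu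
  have hw : 0 ≤ T.weight u * T.weight v := (mul_pos (T.weight_pos u) (T.weight_pos v)).le
  rw [commutatorKernel, hdisj, tsum_empty, zero_sub, abs_neg, abs_of_nonneg (by positivity),
    mul_comm]
  exact mul_le_mul_of_nonneg_right hcard hw

theorem exists_abs_commutatorKernel_le (hdep : Tendsto T.dep cofinite atTop) :
    ∃ M, ∀ u v, |T.commutatorKernel u v| ≤ M * (T.weight u * T.weight v) := by
  obtain ⟨M, hM⟩ := exists_abs_commutatorKernel_self_le hB hdep
  have hM0 : 0 ≤ M := nonneg_of_mul_nonneg_left ((abs_nonneg _).trans (hM T.root))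
    (pow_pos (T.weight_pos _) 2)
  have hcomparable {u v : V} (h : v ∈ T.ancestors u) :
      |T.commutatorKernel u v| ≤ M * (T.weight u * T.weight v) := by
    rw [commutatorKernel_of_mem_ancestors h,
      ← commutatorKernel_of_mem_ancestors (mem_ancestors_self u)]
    refine (hM u).trans ?_
    rw [sq]
    gcongr
    · exact (T.weight_pos u).le
    · exact weight_le_of_mem_ancestors h
  refine ⟨max M (B + 1), fun u v ↦ ?_⟩
  have hw : 0 ≤ T.weight u * T.weight v := (mul_pos (T.weight_pos u) (T.weight_pos v)).le
  by_cases hvu : v ∈ T.ancestors u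
  · exact (hcomparable hvu).trans (mul_le_mul_of_nonneg_right (le_max_left _ _) hw)
  by_cases huv : u ∈ T.ancestors v
  · rw [commutatorKernel_comm]
    refine (mul_comm (T.weight v) _ ▸ hcomparable huv).trans ?_
    exact mul_le_mul_of_nonneg_right (le_max_left _ _) hw
  · exact (abs_commutatorKernel_le_of_notMem_ancestors hB huv hvu).trans
      (mul_le_mul_of_nonneg_right (le_max_right _ _) hw)

end CommutatorKernel

end TreeData

section L2

variable {V : Type}

/-- The standard orthonormal basis of `ℓ²(V)`. -/
def stdBasis (V : Type) : HilbertBasis V ℂ (L2 V) := .ofRepr (.refl ℂ _)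

theorem inner_stdBasis (v : V) (f : L2 V) : ⟪stdBasis V v, f⟫_ℂ = f v :=
  ((stdBasis V).repr_apply_apply f v).symm

theorem stdBasis_apply (u v : V) : stdBasis V u v = Set.indicator {u} 1 v := by
  classical
  have h : stdBasis V u = lp.single 2 u (1 : ℂ) := (stdBasis V).repr_self u
  rw [h, lp.single_apply, Set.indicator_apply]
  simp [Pi.single_apply]

theorem inner_eq_tsum_inter {f g : L2 V} {s t : Set V} {a b : V → ℝ}
    (hf : ∀ v, f v = s.indicator (fun w ↦ (a w : ℂ)) v)
    (hg : ∀ v, g v = t.indicator (fun w ↦ (b w : ℂ)) v) :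
    ⟪f, g⟫_ℂ = (∑' v : ↥(s ∩ t), a v * b v : ℝ) := by
  rw [lp.inner_eq_tsum, tsum_subtype (s ∩ t) fun v ↦ a v * b v, Complex.ofReal_tsum]
  refine tsum_congr fun v ↦ ?_
  by_cases hs : v ∈ s <;> by_cases ht : v ∈ t <;> simp [hf, hg, hs, ht, mul_comm]

theorem inner_selfCommutator_apply {𝕜 E : Type*} [RCLike 𝕜] [NormedAddCommGroup E]
    [InnerProductSpace 𝕜 E] [CompleteSpace E] (C : E →L[𝕜] E) (x y : E) :
    ⟪x, (adjoint C * C - C * adjoint C) y⟫_𝕜 =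
      ⟪C x, C y⟫_𝕜 - ⟪adjoint C x, adjoint C y⟫_𝕜 := by
  rw [sub_apply, inner_sub_right, mul_apply_eq_comp, mul_apply_eq_comp, adjoint_inner_right,
    adjoint_inner_left]

end L2

namespace TreeData

section CesaroOperator

variable {V : Type} {T : TreeData V}

theorem cesaro_indicator_singleton (u v : V) :
    T.cesaro (Set.indicator {u} 1) v =
      (T.descendants u).indicator (fun w ↦ (T.weight w : ℂ)) v := by
  by_cases h : u ∈ T.ancestors v
  · have hsum : ∑ j ∈ Finset.range (T.dep v + 1), Set.indicator {u} (1 : V → ℂ) (T.par^[j] v) =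
        1 := by
      rw [Finset.sum_eq_single_of_mem (T.dep v - T.dep u)
        (Finset.mem_range_succ_iff.2 (Nat.sub_le _ _)), iterate_par_of_mem_ancestors h]
      · simp
      · intro j hj hne
        refine Set.indicator_of_notMem (fun hju ↦ hne ?_) _
        rw [← Set.mem_singleton_iff.1 hju, dep_iterate_par]
        have := Finset.mem_range.1 hj
        omega
    rw [Set.indicator_of_mem (s := T.descendants u) h]
    simp [cesaro, hsum, weight]
  · rw [Set.indicator_of_notMem (s := T.descendants u) h, cesaro, Finset.sum_eq_zero, mul_zero]
    exact fun j _ ↦ Set.indicator_of_notMem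
      (fun hju : T.par^[j] v ∈ ({u} : Set V) ↦ h ⟨j, hju⟩) _

variable {C : L2 V →L[ℂ] L2 V} (hC : ∀ (f : L2 V) (v : V), C f v = T.cesaro ⇑f v)

include hC

theorem cesaro_stdBasis_apply (u v : V) :
    C (stdBasis V u) v = (T.descendants u).indicator (fun w ↦ (T.weight w : ℂ)) v := by
  rw [hC, funext (stdBasis_apply u), cesaro_indicator_singleton]

theorem adjoint_cesaro_stdBasis_apply (u v : V) :
    adjoint C (stdBasis V u) v = (T.ancestors u).indicator (fun _ ↦ (T.weight u : ℂ)) v := by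
  rw [← inner_stdBasis, adjoint_inner_right, ← inner_conj_symm, inner_stdBasis,
    cesaro_stdBasis_apply hC]
  by_cases h : v ∈ T.ancestors u
  · rw [Set.indicator_of_mem (s := T.descendants v) h, Set.indicator_of_mem h, Complex.conj_ofReal]
  · rw [Set.indicator_of_notMem (s := T.descendants v) h, Set.indicator_of_notMem h, map_zero]

theorem inner_selfCommutator_stdBasis (u v : V) :
    ⟪stdBasis V v, (adjoint C * C - C * adjoint C) (stdBasis V u)⟫_ℂ = T.commutatorKernel u v := by
  rw [inner_selfCommutator_apply,
    inner_eq_tsum_inter (cesaro_stdBasis_apply hC v) (cesaro_stdBasis_apply hC u),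
    inner_eq_tsum_inter (adjoint_cesaro_stdBasis_apply hC v) (adjoint_cesaro_stdBasis_apply hC u),
    tsum_const, ← Complex.ofReal_sub, T.commutatorKernel_comm, commutatorKernel]
  simp [sq, Set.ncard, mul_comm]

theorem summable_weight_sq : Summable fun v ↦ T.weight v ^ 2 := by
  have h := (lp.memℓp (C (stdBasis V T.root))).summable (by norm_num)
  simpa [cesaro_stdBasis_apply hC, descendants, root_mem_ancestors] using h

end CesaroOperator

end TreeData

theorem cesaro_essentially_normal_general {V : Type} (T : TreeData V)
    (hfbi : ∃ B : ℕ, ∀ v : V, T.branching v → T.dep v ≤ B)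
    (C : L2 V →L[ℂ] L2 V) (hC : ∀ (f : L2 V) (v : V), C f v = T.cesaro ⇑f v) :
    IsCompactOperator ⇑(adjoint C * C - C * adjoint C) := by
  obtain ⟨B, hB⟩ := hfbi
  have hw := TreeData.summable_weight_sq hC
  obtain ⟨M, hM⟩ := TreeData.exists_abs_commutatorKernel_le hB (T.tendsto_dep_cofinite hw)
  have hsum : Summable fun p : V × V ↦ (M * (T.weight p.1 * T.weight p.2)) ^ 2 := by
    simpa only [mul_pow] using (hw.mul_of_nonneg hw (fun _ ↦ sq_nonneg _)
      fun _ ↦ sq_nonneg _).mul_left (M ^ 2)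
  refine isCompactOperator_of_summable_sq_norm_inner (stdBasis V) (stdBasis V) _ <|
    hsum.of_nonneg_of_le (fun _ ↦ by positivity) fun p ↦ ?_
  rw [TreeData.inner_selfCommutator_stdBasis hC, Complex.norm_real, Real.norm_eq_abs]
  exact pow_le_pow_left₀ (abs_nonneg _) (hM p.1 p.2) 2

/-- The bounded Cesàro operator of a leafless, locally finite rooted directed
tree of finite branching index is essentially normal: its self-commutator is compact. -/
theorem cesaro_essentially_normal {V : Type} [Countable V] [Infinite V]
    (T : TreeData V)
    (hleafless : ∀ u : V, (T.chi u).Nonempty)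
    (hlocfin : ∀ u : V, (T.chi u).Finite)
    (hfbi : ∃ B : ℕ, ∀ v : V, T.branching v → T.dep v ≤ B)
    (C : L2 V →L[ℂ] L2 V) (hC : ∀ (f : L2 V) (v : V), C f v = T.cesaro ⇑f v) :
    IsCompactOperator
      ⇑(ContinuousLinearMap.adjoint C * C - C * ContinuousLinearMap.adjoint C) := by
  exact cesaro_essentially_normal_general T hfbi C hC
end
end

section
/- Let T = (V, root, par) be a narrow rooted directed tree. Then: (1) T is locally finite, i.e. Chi(u) is finite for every u ∈ V, and more generally sup_{j≥0} card(Chi^⟨j⟩(w)) < ∞ for every w ∈ V; and (2) if in addition T is leafless, then T has finite branching index, i.e. the set of depths of branching vertices (vertices with at least two children) is bounded. -/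
noncomputable section

open scoped ENNReal

/-- The `j`-fold iterated children set `Chi^⟨j⟩(w)`. -/
def TreeData.chiIter {V : Type} (T : TreeData V) (w : V) (j : ℕ) : Set V :=
  {v : V | T.dep v = T.dep w + j ∧ T.par^[j] v = w}

/-!
In a leafless tree the parent map sends each level onto the preceding one, so the level sizes are
nondecreasing. When they are bounded they are eventually constant, and from then on the parent map,
being a surjection between finite levels of equal size, is injective: no vertex branches any more.
-/

namespace TreeData

open Filter

variable {V : Type} (T : TreeData V)

theorem dep_root : T.dep T.root = 0 := by
  classical
  exact (Nat.find_eq_zero _).2 rfl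

variable {T} in
theorem dep_eq_dep_par_add_one {v : V} (hv : v ≠ T.root) : T.dep v = T.dep (T.par v) + 1 := by
  classical
  exact Nat.find_comp_succ (T.hroot v) (T.hroot (T.par v)) hv

theorem chi_subset_level (u : V) : T.chi u ⊆ T.level (T.dep u + 1) := by
  rintro v ⟨hv, rfl⟩
  exact dep_eq_dep_par_add_one hv

theorem chiIter_subset_level (w : V) (j : ℕ) : T.chiIter w j ⊆ T.level (T.dep w + j) :=
  fun _ hv => hv.1

theorem mapsTo_par_level (n : ℕ) : Set.MapsTo T.par (T.level (n + 1)) (T.level n) := by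
  intro v (hv : T.dep v = n + 1)
  have hv_ne : v ≠ T.root := by
    rintro rfl
    simp [dep_root] at hv
  exact Nat.succ.inj ((dep_eq_dep_par_add_one hv_ne).symm.trans hv)

variable {T}

theorem surjOn_par_level (hleafless : ∀ u, (T.chi u).Nonempty) (n : ℕ) :
    Set.SurjOn T.par (T.level (n + 1)) (T.level n) := by
  rintro u rfl
  obtain ⟨v, hv⟩ := hleafless u
  exact ⟨v, T.chi_subset_level u hv, hv.2⟩

theorem image_par_level (hleafless : ∀ u, (T.chi u).Nonempty) (n : ℕ) :
    T.par '' T.level (n + 1) = T.level n :=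
  (surjOn_par_level hleafless n).image_eq_of_mapsTo (T.mapsTo_par_level n)

theorem monotone_ncard_level (hleafless : ∀ u, (T.chi u).Nonempty)
    (hfin : ∀ n, (T.level n).Finite) : Monotone fun n => (T.level n).ncard := by
  refine monotone_nat_of_le_succ fun n => ?_
  rw [← image_par_level hleafless n]
  exact Set.ncard_image_le (hfin _)

theorem eventually_injOn_par_level (hleafless : ∀ u, (T.chi u).Nonempty)
    (hfin : ∀ n, (T.level n).Finite) (hbdd : BddAbove (Set.range fun n => (T.level n).ncard)) :
    ∀ᶠ n in atTop, Set.InjOn T.par (T.level (n + 1)) := by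
  have hconst : ∀ᶠ n in atTop, (T.level n).ncard = ⨆ k, (T.level k).ncard := by
    simpa [nhds_discrete] using
      tendsto_atTop_ciSup (monotone_ncard_level hleafless hfin) hbdd
  filter_upwards [hconst, (tendsto_add_atTop_nat 1).eventually hconst] with n hn hn_succ
  refine Set.injOn_of_ncard_image_eq ?_ (hfin (n + 1))
  rw [image_par_level hleafless, hn, hn_succ]

theorem not_branching_of_injOn_par_level {v : V}
    (hinj : Set.InjOn T.par (T.level (T.dep v + 1))) : ¬ T.branching v := by
  have hsub : (T.chi v).Subsingleton := fun a ha b hb =>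
    hinj (T.chi_subset_level v ha) (T.chi_subset_level v hb) (ha.2.trans hb.2.symm)
  exact not_le.2 ((Set.encard_le_one_iff_subsingleton.2 hsub).trans_lt (by norm_num))

end TreeData

/-- A narrow rooted directed tree is locally finite — indeed
`sup_j card(Chi^⟨j⟩(w)) < ∞` for every vertex `w` — and, if leafless, has finite branching
index. -/
theorem narrow_locally_finite_and_finite_branching_index {V : Type} [Countable V] [Infinite V]
    (T : TreeData V) (m : ℕ) (hm : ∀ n : ℕ, (T.level n).encard ≤ m) :
    ((∀ u : V, (T.chi u).Finite) ∧
      ∀ w : V, ∃ M : ℕ, ∀ j : ℕ, (T.chiIter w j).encard ≤ M) ∧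
    ((∀ u : V, (T.chi u).Nonempty) →
      ∃ B : ℕ, ∀ v : V, T.branching v → T.dep v ≤ B) := by
  have hfin : ∀ n, (T.level n).Finite := fun n => Set.finite_of_encard_le_coe (hm n)
  refine ⟨⟨fun u => (hfin _).subset (T.chi_subset_level u), fun w => ⟨m, fun j => ?_⟩⟩,
    fun hleafless => ?_⟩
  · exact (Set.encard_le_encard (T.chiIter_subset_level w j)).trans (hm _)
  · have hbdd : BddAbove (Set.range fun n => (T.level n).ncard) :=
      ⟨m, Set.forall_mem_range.2 fun n => (Set.encard_le_coe_iff_finite_ncard_le.1 (hm n)).2⟩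
    obtain ⟨B, hB⟩ :=
      Filter.eventually_atTop.1 (TreeData.eventually_injOn_par_level hleafless hfin hbdd)
    refine ⟨B, fun v hv => le_of_not_ge fun hBv => ?_⟩
    exact TreeData.not_branching_of_injOn_par_level (hB _ hBv) hv
end
end

section
/- There exists a rooted directed tree T = (V, root, par) satisfying card(Chi^⟨n⟩(root)) ≤ n + 1 for every n ≥ 0 (so that sup_{n} card(Chi^⟨n⟩(root))/(n+1) < ∞), together with a function f ∈ ℓ²(V) such that Λ_T f ∉ ℓ²(V) (i.e. Σ_{v∈V} |(Λ_T f)(v)|² = ∞). In particular, the Cesàro map of this tree does not define a bounded operator on ℓ²(V), so the narrowness hypothesis in the boundedness theorem cannot be weakened to linear growth of level cardinalities. -/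
noncomputable section

open scoped ENNReal

/-!
`Λ_T` sends the indicator of the root to `v ↦ 1 / (dep v + 1)`, because the root occurs exactly
once among `v, par v, …, par^[dep v] v`. Grouping the vertices by depth, the image is
square-summable only if `∑ n, #(level n) / (n + 1)²` converges; when level `n` has exactly `n + 1`
vertices this is the harmonic series.
-/

theorem summable_comp_iff_ncard_fiber {α β : Type*} {φ : α → β} {g : β → ℝ} (hg : 0 ≤ g)
    (hφ : ∀ b, (φ ⁻¹' {b}).Finite) :
    Summable (g ∘ φ) ↔ Summable fun b => (φ ⁻¹' {b}).ncard * g b := by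
  have comp_fiber (b : β) (a : {a // φ a = b}) :
      (g ∘ φ ∘ Equiv.sigmaFiberEquiv φ) ⟨b, a⟩ = g b := congrArg g a.2
  have finite_fiber (b : β) : Finite {a // φ a = b} := (hφ b).to_subtype
  have card_fiber (b : β) : Nat.card {a // φ a = b} = (φ ⁻¹' {b}).ncard :=
    Nat.card_coe_set_eq (φ ⁻¹' {b})
  rw [← (Equiv.sigmaFiberEquiv φ).summable_iff, Function.comp_assoc,
    summable_sigma_of_nonneg (f := g ∘ φ ∘ Equiv.sigmaFiberEquiv φ) fun _ => hg _,
    and_iff_right fun _ => Summable.of_finite]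
  simp only [comp_fiber, tsum_const, card_fiber, nsmul_eq_mul]

theorem iterate_eq_iff_height_le {V : Type*} {root : V} {par : V → V} {ht : V → ℕ}
    (ht_eq_zero : ∀ v, ht v = 0 ↔ v = root) (ht_par : Function.Semiconj ht par Nat.pred)
    (n : ℕ) (v : V) : par^[n] v = root ↔ ht v ≤ n := by
  rw [← ht_eq_zero, ht_par.iterate_right n v, Nat.pred_iterate, Nat.sub_eq_zero_iff_le]

namespace TreeData

variable {V : Type}

/-- The rooted tree given by a parent map that lowers a height function `ht` by one, where `ht`
vanishes only at the root. As `Nat.pred 0 = 0`, this forces the root to be its own parent. -/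
def ofHeight (root : V) (par : V → V) (ht : V → ℕ) (ht_eq_zero : ∀ v, ht v = 0 ↔ v = root)
    (ht_par : Function.Semiconj ht par Nat.pred) : TreeData V where
  root := root
  par := par
  par_root := (iterate_eq_iff_height_le ht_eq_zero ht_par 1 root).2 <| by
    simp only [(ht_eq_zero root).2 rfl, zero_le]
  hroot v := ⟨ht v, (iterate_eq_iff_height_le ht_eq_zero ht_par _ v).2 le_rfl⟩

variable (T : TreeData V)

theorem par_iterate_eq_root_iff (n : ℕ) (v : V) : T.par^[n] v = T.root ↔ T.dep v ≤ n := by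
  classical
  refine ⟨fun h => Nat.find_min' (T.hroot v) h, fun h => ?_⟩
  have par_iterate_dep : T.par^[T.dep v] v = T.root := Nat.find_spec (T.hroot v)
  rw [← Nat.sub_add_cancel h, Function.iterate_add_apply, par_iterate_dep,
    Function.iterate_fixed T.par_root]

theorem dep_ofHeight {root : V} {par : V → V} {ht : V → ℕ}
    (ht_eq_zero : ∀ v, ht v = 0 ↔ v = root) (ht_par : Function.Semiconj ht par Nat.pred) :
    (ofHeight root par ht ht_eq_zero ht_par).dep = ht := by
  funext v
  refine eq_of_forall_ge_iff fun n => ?_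
  rw [← par_iterate_eq_root_iff]
  exact iterate_eq_iff_height_le ht_eq_zero ht_par n v

theorem cesaro_single_root [DecidableEq V] (c : ℂ) (v : V) :
    T.cesaro (Pi.single T.root c) v = ((T.dep v : ℂ) + 1)⁻¹ * c := by
  rw [cesaro, Finset.sum_eq_single_of_mem (T.dep v) (Finset.self_mem_range_succ _),
    (T.par_iterate_eq_root_iff _ v).2 le_rfl, Pi.single_eq_same]
  intro j hj hne
  have j_lt_dep : j < T.dep v := (Finset.mem_range_succ_iff.1 hj).lt_of_ne hne
  exact Pi.single_eq_of_ne (M := fun _ : V => ℂ)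
    (mt (T.par_iterate_eq_root_iff j v).1 j_lt_dep.not_ge) c

theorem memℓp_cesaro_single_root_iff [DecidableEq V] (level_finite : ∀ n, (T.level n).Finite)
    {p : ℝ≥0∞} (hp : 0 < p.toReal) :
    Memℓp (T.cesaro (Pi.single T.root 1)) p ↔
      Summable fun n => (T.level n).ncard * ((n + 1 : ℝ)⁻¹) ^ p.toReal := by
  have norm_cesaro (v : V) :
      ‖T.cesaro (Pi.single T.root 1) v‖ = ((T.dep v : ℝ) + 1)⁻¹ := by
    rw [cesaro_single_root, mul_one, norm_inv, ← Nat.cast_succ, Complex.norm_natCast, Nat.cast_succ]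
  simp only [memℓp_gen_iff hp, norm_cesaro]
  exact summable_comp_iff_ncard_fiber (φ := T.dep)
    (g := fun n => ((n + 1 : ℝ)⁻¹) ^ p.toReal) (fun n => by positivity) level_finite

end TreeData

/-- The parent map of the comb on `ℕ × ℕ`: the spine is `ℕ × {0}`, and the tooth at `(m, 0)` is the
ray `{m} × ℕ`. -/
def combParent : ℕ × ℕ → ℕ × ℕ
  | (m, 0) => (m - 1, 0)
  | (m, k + 1) => (m, k)

theorem combParent_semiconj : Function.Semiconj (fun v : ℕ × ℕ => v.1 + v.2) combParent Nat.pred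
  | (_, 0) => rfl
  | (_, _ + 1) => rfl

/-- The comb: an infinite ray with a further infinite ray attached at each of its vertices. -/
def combTree : TreeData (ℕ × ℕ) :=
  .ofHeight (0, 0) combParent (fun v => v.1 + v.2) (fun _ => by simp [Prod.ext_iff])
    combParent_semiconj

theorem level_combTree (n : ℕ) : combTree.level n = Finset.HasAntidiagonal.antidiagonal n := by
  ext v
  rw [TreeData.level, combTree, TreeData.dep_ofHeight, Set.mem_ofPred_eq, Finset.mem_coe,
    Finset.HasAntidiagonal.mem_antidiagonal]

theorem encard_level_combTree (n : ℕ) : (combTree.level n).encard = n + 1 := by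
  rw [level_combTree, Set.encard_coe_eq_coe_finsetCard, Finset.Nat.card_antidiagonal,
    Nat.cast_succ]

theorem not_memℓp_two_cesaro_combTree :
    ¬ Memℓp (combTree.cesaro (Pi.single combTree.root 1)) 2 := by
  have level_finite (n : ℕ) : (combTree.level n).Finite :=
    Set.finite_of_encard_le_coe (encard_level_combTree n).le
  have ncard_level (n : ℕ) : (combTree.level n).ncard = n + 1 := by
    rw [Set.ncard, encard_level_combTree, ← Nat.cast_succ, ENat.toNat_natCast]
  have harmonic_term (n : ℕ) :
      (combTree.level n).ncard * ((n + 1 : ℝ)⁻¹) ^ (2 : ℝ) = 1 / ((n + 1 : ℕ) : ℝ) := by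
    rw [ncard_level, Nat.cast_succ, Real.rpow_two]
    field_simp
  rw [combTree.memℓp_cesaro_single_root_iff level_finite (by norm_num), ENNReal.toReal_ofNat]
  simp only [harmonic_term]
  rw [summable_nat_add_iff (f := fun n : ℕ => 1 / (n : ℝ)) 1]
  exact Real.not_summable_one_div_natCast

/-- There is a rooted directed tree whose `n`-th level has at most `n + 1`
vertices, together with an `f ∈ ℓ²(V)` with `Λ_T f ∉ ℓ²(V)`: linear growth of level
cardinalities does not suffice for boundedness of the Cesàro map. -/
theorem exists_tree_linear_levels_cesaro_unbounded :
    ∃ (V : Type) (T : TreeData V), Countable V ∧ Infinite V ∧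
      (∀ n : ℕ, (T.level n).encard ≤ n + 1) ∧
      ∃ f : L2 V, ¬ Memℓp (T.cesaro ⇑f) 2 := by
  refine ⟨ℕ × ℕ, combTree, inferInstance, inferInstance, fun n => (encard_level_combTree n).le,
    lp.single 2 combTree.root 1, ?_⟩
  rw [lp.coeFn_single]
  exact not_memℓp_two_cesaro_combTree
end
end
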